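/- Let E₁ and E₂ be metrizable topological spaces with their Borel σ-algebras, let Ψ : E₁ × E₂ → ℝ be bounded and jointly Borel measurable, and let Φ₁, Φ₂ : E₁ × E₂ → ℝ be jointly Borel measurable. Let X¹ = (X¹_t)_{t≥0} and X² = (X²_t)_{t≥0} be independent càdlàg processes with values in E₁ and E₂ respectively, such that for each x₂ ∈ E₂ the process t ↦ Ψ(X¹_t, x₂) − ∫₀ᵗ Φ₁(X¹_s, x₂) ds is a martingale with respect to the filtration generated by X¹, with E[|Ψ(X¹_t, x₂)|] < ∞ and ∫₀ᵗ E[|Φ₁(X¹_s, x₂)|] ds < ∞ for all t ≥ 0, and symmetrically for each x₁ ∈ E₁ the process t ↦ Ψ(x₁, X²_t) − ∫₀ᵗ Φ₂(x₁, X²_s) ds is a martingale with respect to the filtration generated by X², with the analogous integrability. Assume moreover that ∫₀ᵀ∫₀ᵀ E[|Φᵢ(X¹_s, X²_t)|] ds dt < ∞ for all T ≥ 0 and i = 1, 2. Define R(x₁,x₂) := Φ₁(x₁,x₂) − Φ₂(x₁,x₂). Then for Lebesgue-almost every T ≥ 0, E[Ψ(X¹_T, X²_0)] − E[Ψ(X¹_0,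 X²_T)] = ∫₀ᵀ E[R(X¹_t, X²_{T−t})] dt. -/

import Mathlib

open MeasureTheory ProbabilityTheory Filter Set
open scoped NNReal ENNReal

/-!
Write `F s t = E[Ψ(X¹_s, X²_t)]`. By independence, freezing one coordinate in the martingale problem
of the other gives `F (s + h) t - F s t = ∫ E[Φ₁(X¹_u, X²_t)] du`, and likewise for `Φ₂` in `t`.
Integrating both identities over the triangle `s + t ≤ S` expresses `∬ E[Φ₁ - Φ₂]` through the
values of `F` on the three sides; the two hypotenuse terms `∫₀ˢ F (S - t) t dt` cancel, leaving
`∫₀ˢ (F T 0 - F 0 T) dT`. Slicing the same triangle along the antidiagonals `s + t = T` turns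
`∬ E[Φ₁ - Φ₂]` into `∫₀ˢ ∫₀ᵀ E[(Φ₁ - Φ₂)(X¹_t, X²_{T-t})] dt dT`, and Lebesgue differentiation in
`S` gives the identity for almost every `T`.
-/

section Triangle

variable {G : Type*} [NormedAddCommGroup G] {S : ℝ}

/-- The triangle of pairs of positive times `(s, t)` with `s + t ≤ S`. Its legs are left out so that
its sections are the half-open intervals over which interval integrals are taken. -/
def triangle (S : ℝ) : Set (ℝ × ℝ) :=
  {p | 0 < p.1 ∧ 0 < p.2 ∧ p.1 + p.2 ≤ S}

lemma measurableSet_triangle : MeasurableSet (triangle S) := by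
  unfold triangle
  measurability

lemma triangle_subset : triangle S ⊆ Ioc 0 S ×ˢ Ioc 0 S := by
  rintro ⟨s, t⟩ ⟨hs, ht, hst⟩
  dsimp only at hs ht hst
  exact ⟨⟨hs, by linarith⟩, ⟨ht, by linarith⟩⟩

lemma preimage_swap_triangle : Prod.swap ⁻¹' triangle S = triangle S := by
  ext ⟨s, t⟩
  simp [triangle, and_left_comm, add_comm]

lemma indicator_triangle_apply (f : ℝ × ℝ → G) (s t : ℝ) :
    (triangle S).indicator f (s, t) =
      (Ioc 0 S).indicator (fun t ↦ (Ioc 0 (S - t)).indicator (fun s ↦ f (s, t)) s) t := by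
  simp only [indicator_apply, triangle, mem_ofPred_eq, mem_Ioc]
  grind

lemma indicator_triangle_apply_sub (f : ℝ × ℝ → G) (t T : ℝ) :
    (triangle S).indicator f (t, T - t) =
      (Ioc 0 S).indicator (fun T ↦ (Ioo 0 T).indicator (fun t ↦ f (t, T - t)) t) T := by
  simp only [indicator_apply, triangle, mem_ofPred_eq, mem_Ioc, mem_Ioo]
  grind

variable [NormedSpace ℝ G] {f : ℝ × ℝ → G}

theorem setIntegral_triangle (hS : 0 ≤ S) (hf : IntegrableOn f (triangle S)) :
    ∫ p in triangle S, f p = ∫ t in (0 : ℝ)..S, ∫ s in (0 : ℝ)..(S - t), f (s, t) := by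
  rw [← integral_indicator measurableSet_triangle, Measure.volume_eq_prod,
    integral_prod_symm _ (hf.integrable_indicator measurableSet_triangle),
    intervalIntegral.integral_of_le hS, ← integral_indicator measurableSet_Ioc]
  refine integral_congr_ae (ae_of_all _ fun t ↦ ?_)
  by_cases ht : t ∈ Ioc 0 S
  · simp [indicator_triangle_apply, ht, integral_indicator measurableSet_Ioc,
      intervalIntegral.integral_of_le (sub_nonneg.2 ht.2)]
  · simp [indicator_triangle_apply, ht]

theorem setIntegral_triangle_comp_swap (f : ℝ × ℝ → G) :
    ∫ p in triangle S, f p.swap = ∫ p in triangle S, f p := by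
  have hswap : MeasurePreserving (Prod.swap : ℝ × ℝ → ℝ × ℝ) := Measure.measurePreserving_swap
  simpa only [preimage_swap_triangle] using hswap.setIntegral_preimage_emb
    MeasurableEquiv.prodComm.measurableEmbedding f (triangle S)

lemma integral_indicator_triangle_antidiagonal (f : ℝ × ℝ → G) :
    (fun T ↦ ∫ t, (triangle S).indicator f (t, T - t)) =
      (Ioc 0 S).indicator fun T ↦ ∫ t in (0 : ℝ)..T, f (t, T - t) := by
  ext T
  by_cases hT : T ∈ Ioc 0 S
  · simp [indicator_triangle_apply_sub, hT, integral_indicator measurableSet_Ioo,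
      intervalIntegral.integral_of_le hT.1.le, integral_Ioc_eq_integral_Ioo]
  · simp [indicator_triangle_apply_sub, hT]

theorem intervalIntegrable_integral_antidiagonal (hS : 0 ≤ S) (hf : IntegrableOn f (triangle S)) :
    IntervalIntegrable (fun T ↦ ∫ t in (0 : ℝ)..T, f (t, T - t)) volume 0 S := by
  rw [intervalIntegrable_iff_integrableOn_Ioc_of_le hS,
    ← integrable_indicator_iff measurableSet_Ioc, ← integral_indicator_triangle_antidiagonal]
  exact ((measurePreserving_prod_sub volume volume).integrable_comp_of_integrable
    (hf.integrable_indicator measurableSet_triangle)).integral_prod_right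

theorem setIntegral_triangle_eq_integral_antidiagonal (hS : 0 ≤ S)
    (hf : IntegrableOn f (triangle S)) :
    ∫ p in triangle S, f p = ∫ T in (0 : ℝ)..S, ∫ t in (0 : ℝ)..T, f (t, T - t) := by
  have shear := measurePreserving_prod_sub (volume : Measure ℝ) volume
  have hind := hf.integrable_indicator measurableSet_triangle
  calc ∫ p in triangle S, f p
      = ∫ p : ℝ × ℝ, (triangle S).indicator f (p.1, p.2 - p.1) := by
        rw [← integral_indicator measurableSet_triangle]
        exact (shear.integral_comp' (f := MeasurableEquiv.shearSubRight ℝ) _).symm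
    _ = ∫ T, ∫ t, (triangle S).indicator f (t, T - t) :=
        integral_prod_symm _ (shear.integrable_comp_of_integrable hind)
    _ = ∫ T in (0 : ℝ)..S, ∫ t in (0 : ℝ)..T, f (t, T - t) := by
        rw [integral_indicator_triangle_antidiagonal, integral_indicator measurableSet_Ioc,
          intervalIntegral.integral_of_le hS]

end Triangle

theorem ae_restrict_Ici_eq_of_intervalIntegral_eq {G : Type*} [NormedAddCommGroup G]
    [NormedSpace ℝ G] [CompleteSpace G] {f g : ℝ → G} {a : ℝ}
    (hf : ∀ b, a ≤ b → IntervalIntegrable f volume a b)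
    (hg : ∀ b, a ≤ b → IntervalIntegrable g volume a b)
    (h : ∀ b, a ≤ b → ∫ t in a..b, f t = ∫ t in a..b, g t) :
    f =ᵐ[volume.restrict (Ici a)] g := by
  rw [← restrict_Ioi_eq_restrict_Ici]
  have hIoo (n : ℕ) : ∀ᵐ t, t ∈ Ioo a (a + n) → f t = g t := by
    have hn : a ≤ a + n := by simp
    filter_upwards [(hf _ hn).ae_hasDerivAt_integral, (hg _ hn).ae_hasDerivAt_integral]
      with t hft hgt ht
    have htn : t ∈ uIcc a (a + n) := uIcc_of_le hn ▸ Ioo_subset_Icc_self ht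
    refine (hft htn a left_mem_uIcc).unique
      ((hgt htn a left_mem_uIcc).congr_of_eventuallyEq ?_)
    filter_upwards [Ioi_mem_nhds ht.1] with b hb using h b (le_of_lt hb)
  refine (ae_restrict_iff' measurableSet_Ioi).2 ?_
  filter_upwards [ae_all_iff.2 hIoo] with t ht hat
  obtain ⟨n, hn⟩ := exists_nat_gt (t - a)
  exact ht n ⟨hat, by linarith⟩

section MeasurableProcess

variable {Ω E : Type*} [MeasurableSpace Ω] [MeasurableSpace E]

/-- The point of `(t, ∞)` next to `t` in the grid of mesh `1 / (n + 1)`. -/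
noncomputable def nextGridPoint (n : ℕ) (t : ℝ≥0) : ℝ≥0 :=
  ((⌊t * (n + 1)⌋₊ : ℝ≥0) + 1) / (n + 1)

lemma tendsto_nextGridPoint (t : ℝ≥0) :
    Tendsto (nextGridPoint · t) atTop (nhdsWithin t (Ici t)) := by
  have le_next (n : ℕ) : t ≤ nextGridPoint n t :=
    (le_div_iff₀ (by positivity)).2 (Nat.lt_floor_add_one _).le
  have next_le (n : ℕ) : nextGridPoint n t ≤ t + 1 / ((n : ℝ≥0) + 1) := by
    rw [nextGridPoint, div_le_iff₀ (by positivity), add_mul, one_div_mul_cancel (by positivity)]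
    gcongr
    exact Nat.floor_le (by positivity)
  refine tendsto_nhdsWithin_iff.2 ⟨?_, .of_forall le_next⟩
  refine tendsto_of_tendsto_of_tendsto_of_le_of_le tendsto_const_nhds ?_ le_next next_le
  simpa using tendsto_const_nhds.add (tendsto_one_div_add_atTop_nhds_zero_nat (𝕜 := ℝ≥0))

theorem measurable_uncurry_of_rightContinuous [TopologicalSpace E]
    [TopologicalSpace.PseudoMetrizableSpace E] [BorelSpace E] {X : ℝ≥0 → Ω → E}
    (hX : ∀ t, Measurable (X t))
    (hrc : ∀ ω t, ContinuousWithinAt (fun s ↦ X s ω) (Ici t) t) :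
    Measurable fun p : ℝ≥0 × Ω ↦ X p.1 p.2 := by
  have hlim : Tendsto (fun n (p : ℝ≥0 × Ω) ↦ X (nextGridPoint n p.1) p.2) atTop
      (nhds fun p ↦ X p.1 p.2) :=
    tendsto_pi_nhds.2 fun p ↦ Tendsto.comp (hrc p.2 p.1) (tendsto_nextGridPoint p.1)
  refine measurable_of_tendsto_metrizable (fun n ↦ ?_) hlim
  have hgrid (c : ℕ → ℝ≥0) : Measurable fun q : ℕ × Ω ↦ X (c q.1) q.2 :=
    measurable_from_prod_countable_right fun k ↦ hX (c k)
  have hfloor : Measurable fun p : ℝ≥0 × Ω ↦ (⌊p.1 * ((n : ℝ≥0) + 1)⌋₊, p.2) :=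
    (Nat.measurable_floor.comp (measurable_fst.mul_const _)).prodMk measurable_snd
  simpa only [nextGridPoint, Function.comp_def] using
    (hgrid fun k ↦ ((k : ℝ≥0) + 1) / (n + 1)).comp hfloor

lemma measurable_of_measurable_uncurry {X : ℝ → Ω → E}
    (hX : Measurable fun p : ℝ≥0 × Ω ↦ X p.1 p.2) {t : ℝ} (ht : 0 ≤ t) : Measurable (X t) := by
  lift t to ℝ≥0 using ht
  exact hX.comp measurable_prodMk_left

lemma aemeasurable_comp_time {A : Type*} [MeasurableSpace A] {ν : Measure A} {P : Measure Ω}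
    {X : ℝ → Ω → E} (hX : Measurable fun p : ℝ≥0 × Ω ↦ X p.1 p.2) {τ : A → ℝ}
    (hτ : Measurable τ) (hτ0 : ∀ᵐ x ∂ν, 0 ≤ τ x) :
    AEMeasurable (fun p : A × Ω ↦ X (τ p.1) p.2) (ν.prod P) := by
  refine ⟨fun p ↦ X (τ p.1).toNNReal p.2,
    hX.comp (f := fun p : A × Ω ↦ ((τ p.1).toNNReal, p.2)) (by fun_prop), ?_⟩
  filter_upwards [Measure.quasiMeasurePreserving_fst.ae hτ0] with p hp
  rw [Real.coe_toNNReal _ hp]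

lemma ae_aemeasurable_of_uncurry {A : Type*} [MeasurableSpace A] {ν : Measure A} {P : Measure Ω}
    [SFinite P] {X : A → Ω → E} (hX : AEMeasurable (fun p : A × Ω ↦ X p.1 p.2) (ν.prod P)) :
    ∀ᵐ u ∂ν, AEMeasurable (X u) P := by
  filter_upwards [Measure.ae_ae_of_ae_prod hX.ae_eq_mk] with u hu
  exact ⟨_, hX.measurable_mk.comp measurable_prodMk_left, hu⟩

end MeasurableProcess

section Independence

variable {T Ω E₁ E₂ G : Type*} [MeasurableSpace T] [MeasurableSpace Ω] [MeasurableSpace E₁]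
  [MeasurableSpace E₂] [NormedAddCommGroup G] {ν : Measure T} {P : Measure Ω} [IsFiniteMeasure P]
  {f : E₁ × E₂ → G} {Z : Ω → E₂}

theorem lintegral_comp_prodMk_of_indepFun {Y : Ω → E₁} (hY : AEMeasurable Y P)
    (hZ : AEMeasurable Z P) (hYZ : Y ⟂ᵢ[P] Z) {f : E₁ × E₂ → ℝ≥0∞} (hf : Measurable f) :
    ∫⁻ ω, f (Y ω, Z ω) ∂P = ∫⁻ ω, ∫⁻ z, f (Y ω, z) ∂(P.map Z) ∂P := by
  rw [← lintegral_map' hf.aemeasurable (hY.prodMk hZ), hYZ.map_prod_eq_prod_map_map hY hZ,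
    lintegral_prod _ hf.aemeasurable, lintegral_map' hf.lintegral_prod_right'.aemeasurable hY]

section FixedTime

variable {Y : Ω → E₁}

lemma integrable_prod_map_map_of_indepFun (hY : AEMeasurable Y P) (hZ : AEMeasurable Z P)
    (hYZ : Y ⟂ᵢ[P] Z) (hf : StronglyMeasurable f) (hint : Integrable (fun ω ↦ f (Y ω, Z ω)) P) :
    Integrable f ((P.map Y).prod (P.map Z)) :=
  hYZ.map_prod_eq_prod_map_map hY hZ ▸
    (integrable_map_measure hf.aestronglyMeasurable (hY.prodMk hZ)).2 hint

variable [NormedSpace ℝ G]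

lemma integrable_integral_comp_of_indepFun (hY : AEMeasurable Y P) (hZ : AEMeasurable Z P)
    (hYZ : Y ⟂ᵢ[P] Z) (hf : StronglyMeasurable f) (hint : Integrable (fun ω ↦ f (Y ω, Z ω)) P) :
    Integrable (fun z ↦ ∫ ω, f (Y ω, z) ∂P) (P.map Z) := by
  have h := (integrable_prod_map_map_of_indepFun hY hZ hYZ hf hint).integral_prod_right
  refine h.congr (ae_of_all _ fun z ↦ ?_)
  exact integral_map hY (hf.comp_measurable measurable_prodMk_right).aestronglyMeasurable

theorem integral_comp_prodMk_of_indepFun (hY : AEMeasurable Y P) (hZ : AEMeasurable Z P)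
    (hYZ : Y ⟂ᵢ[P] Z) (hf : StronglyMeasurable f) (hint : Integrable (fun ω ↦ f (Y ω, Z ω)) P) :
    ∫ ω, f (Y ω, Z ω) ∂P = ∫ ω, ∫ z, f (Y ω, z) ∂(P.map Z) ∂P := by
  rw [← integral_map (hY.prodMk hZ) hf.aestronglyMeasurable, hYZ.map_prod_eq_prod_map_map hY hZ,
    integral_prod _ (integrable_prod_map_map_of_indepFun hY hZ hYZ hf hint),
    integral_map hY hf.integral_prod_right'.aestronglyMeasurable]

theorem integral_comp_prodMk_of_indepFun_symm (hY : AEMeasurable Y P) (hZ : AEMeasurable Z P)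
    (hYZ : Y ⟂ᵢ[P] Z) (hf : StronglyMeasurable f) (hint : Integrable (fun ω ↦ f (Y ω, Z ω)) P) :
    ∫ ω, f (Y ω, Z ω) ∂P = ∫ z, ∫ ω, f (Y ω, z) ∂P ∂(P.map Z) := by
  rw [← integral_map (hY.prodMk hZ) hf.aestronglyMeasurable, hYZ.map_prod_eq_prod_map_map hY hZ,
    integral_prod_symm _ (integrable_prod_map_map_of_indepFun hY hZ hYZ hf hint)]
  refine integral_congr_ae (ae_of_all _ fun z ↦ ?_)
  exact integral_map hY (hf.comp_measurable measurable_prodMk_right).aestronglyMeasurable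

end FixedTime

variable {Y : T → Ω → E₁}

theorem integrable_prod_map_of_indepFun
    (hY : AEMeasurable (fun p : T × Ω ↦ Y p.1 p.2) (ν.prod P))
    (hZ : AEMeasurable Z P) (hYZ : ∀ᵐ u ∂ν, Y u ⟂ᵢ[P] Z) (hf : StronglyMeasurable f)
    (hint : Integrable (fun p : T × Ω ↦ f (Y p.1 p.2, Z p.2)) (ν.prod P)) :
    Integrable (fun q : (T × Ω) × E₂ ↦ f (Y q.1.1 q.1.2, q.2)) ((ν.prod P).prod (P.map Z)) := by
  have hmeas : AEStronglyMeasurable (fun q : (T × Ω) × E₂ ↦ f (Y q.1.1 q.1.2, q.2))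
      ((ν.prod P).prod (P.map Z)) :=
    hf.aestronglyMeasurable.comp_aemeasurable (hY.comp_fst.prodMk measurable_snd.aemeasurable)
  refine ⟨hmeas, ?_⟩
  calc ∫⁻ q : (T × Ω) × E₂, ‖f (Y q.1.1 q.1.2, q.2)‖ₑ ∂((ν.prod P).prod (P.map Z))
      = ∫⁻ u, ∫⁻ ω, ∫⁻ z, ‖f (Y u ω, z)‖ₑ ∂(P.map Z) ∂P ∂ν := by
        rw [lintegral_prod _ hmeas.enorm, lintegral_prod _ hmeas.enorm.lintegral_prod_right']
    _ = ∫⁻ u, ∫⁻ ω, ‖f (Y u ω, Z ω)‖ₑ ∂P ∂ν := by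
        refine lintegral_congr_ae ?_
        filter_upwards [ae_aemeasurable_of_uncurry hY, hYZ] with u hu huZ
        exact (lintegral_comp_prodMk_of_indepFun hu hZ huZ hf.enorm).symm
    _ = ∫⁻ p : T × Ω, ‖f (Y p.1 p.2, Z p.2)‖ₑ ∂(ν.prod P) :=
        (lintegral_prod _ hint.aestronglyMeasurable.enorm).symm
    _ < ∞ := hint.hasFiniteIntegral

theorem integral_integral_comp_prodMk_of_indepFun [NormedSpace ℝ G] [SFinite ν]
    (hY : AEMeasurable (fun p : T × Ω ↦ Y p.1 p.2) (ν.prod P))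
    (hZ : AEMeasurable Z P) (hYZ : ∀ᵐ u ∂ν, Y u ⟂ᵢ[P] Z) (hf : StronglyMeasurable f)
    (hint : Integrable (fun p : T × Ω ↦ f (Y p.1 p.2, Z p.2)) (ν.prod P)) :
    ∫ u, ∫ ω, f (Y u ω, Z ω) ∂P ∂ν = ∫ z, ∫ u, ∫ ω, f (Y u ω, z) ∂P ∂ν ∂(P.map Z) := by
  have hdec := integrable_prod_map_of_indepFun hY hZ hYZ hf hint
  calc ∫ u, ∫ ω, f (Y u ω, Z ω) ∂P ∂ν
      = ∫ u, ∫ ω, ∫ z, f (Y u ω, z) ∂(P.map Z) ∂P ∂ν := by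
        refine integral_congr_ae ?_
        filter_upwards [ae_aemeasurable_of_uncurry hY, hYZ, hint.prod_right_ae] with u hu huZ hui
        exact integral_comp_prodMk_of_indepFun hu hZ huZ hf hui
    _ = ∫ z, ∫ p : T × Ω, f (Y p.1 p.2, z) ∂(ν.prod P) ∂(P.map Z) := by
        rw [← integral_prod _ hdec.integral_prod_left, ← integral_prod _ hdec,
          integral_prod_symm _ hdec]
    _ = ∫ z, ∫ u, ∫ ω, f (Y u ω, z) ∂P ∂ν ∂(P.map Z) := by
        refine integral_congr_ae ?_
        filter_upwards [hdec.prod_left_ae] with z hz using integral_prod _ hz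

end Independence

section Dynkin

variable {Ω E E₁ E₂ G : Type*} {mΩ : MeasurableSpace Ω} [NormedAddCommGroup G] [NormedSpace ℝ G]
  {P : Measure Ω}

/-- Dynkin's formula `E[ψ(X_t)] - E[ψ(X_0)] = ∫₀ᵗ E[φ(X_s)] ds`, demanded only for those `t` for
which the right-hand side converges absolutely. -/
def DynkinFormula (P : Measure Ω) (X : ℝ → Ω → E) (ψ φ : E → G) : Prop :=
  ∀ t, 0 ≤ t → Integrable (fun p : ℝ × Ω ↦ φ (X p.1 p.2)) ((volume.restrict (Ioc 0 t)).prod P) →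
    ∫ ω, ψ (X t ω) ∂P - ∫ ω, ψ (X 0 ω) ∂P = ∫ s in (0 : ℝ)..t, ∫ ω, φ (X s ω) ∂P

theorem dynkinFormula_of_martingale [CompleteSpace G] [IsFiniteMeasure P] {X : ℝ → Ω → E}
    {ψ φ : E → G} {𝓕 : Filtration ℝ≥0 mΩ}
    (hmart : Martingale
      (fun (t : ℝ≥0) ω ↦ ψ (X t ω) - ∫ s in (0 : ℝ)..t, φ (X s ω)) 𝓕 P) :
    DynkinFormula P X ψ φ := by
  intro t ht hφ
  lift t to ℝ≥0 using ht
  have hψ0 : ∫ ω, (ψ (X t ω) - ∫ s in (0 : ℝ)..t, φ (X s ω)) ∂P = ∫ ω, ψ (X 0 ω) ∂P := by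
    simpa using (hmart.setIntegral_eq (zero_le (a := t)) MeasurableSet.univ).symm
  have hφt : Integrable (fun ω ↦ ∫ s in (0 : ℝ)..t, φ (X s ω)) P := by
    simpa only [intervalIntegral.integral_of_le t.coe_nonneg] using hφ.integral_prod_right
  have hψt : Integrable (fun ω ↦ ψ (X t ω)) P := by
    simpa only [Pi.add_def, sub_add_cancel] using (hmart.integrable t).add hφt
  calc ∫ ω, ψ (X t ω) ∂P - ∫ ω, ψ (X 0 ω) ∂P
      = ∫ ω, (∫ s in (0 : ℝ)..t, φ (X s ω)) ∂P := by
        rw [← hψ0, integral_sub hψt hφt, sub_sub_cancel]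
    _ = ∫ s in (0 : ℝ)..t, ∫ ω, φ (X s ω) ∂P := by
        simp only [intervalIntegral.integral_of_le t.coe_nonneg]
        exact (integral_integral_swap hφ).symm

theorem DynkinFormula.prodMk_of_indepFun [MeasurableSpace E₁] [MeasurableSpace E₂]
    [IsFiniteMeasure P] {X : ℝ → Ω → E₁} {Z : Ω → E₂} {ψ φ : E₁ × E₂ → G}
    (hD : ∀ z, DynkinFormula P X (fun x ↦ ψ (x, z)) fun x ↦ φ (x, z))
    (hX : Measurable fun p : ℝ≥0 × Ω ↦ X p.1 p.2) (hZ : AEMeasurable Z P)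
    (hXZ : ∀ t, 0 ≤ t → X t ⟂ᵢ[P] Z) (hψ : StronglyMeasurable ψ) (hφ : StronglyMeasurable φ)
    (hψint : ∀ t, 0 ≤ t → Integrable (fun ω ↦ ψ (X t ω, Z ω)) P) :
    DynkinFormula P (fun t ω ↦ (X t ω, Z ω)) ψ φ := by
  intro t ht hint
  have hpos : ∀ᵐ s ∂volume.restrict (Ioc 0 t), 0 ≤ s :=
    (ae_restrict_mem measurableSet_Ioc).mono fun s hs ↦ hs.1.le
  have hXt := aemeasurable_comp_time (P := P) hX measurable_id hpos
  have hXZt : ∀ᵐ s ∂volume.restrict (Ioc 0 t), X s ⟂ᵢ[P] Z := hpos.mono hXZ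
  have hXs (s : ℝ) (hs : 0 ≤ s) : AEMeasurable (X s) P :=
    (measurable_of_measurable_uncurry hX hs).aemeasurable
  have hψ_int (s : ℝ) (hs : 0 ≤ s) : Integrable (fun z ↦ ∫ ω, ψ (X s ω, z) ∂P) (P.map Z) :=
    integrable_integral_comp_of_indepFun (hXs s hs) hZ (hXZ s hs) hψ (hψint s hs)
  have hψ_eq (s : ℝ) (hs : 0 ≤ s) :
      ∫ ω, ψ (X s ω, Z ω) ∂P = ∫ z, (∫ ω, ψ (X s ω, z) ∂P) ∂(P.map Z) :=
    integral_comp_prodMk_of_indepFun_symm (hXs s hs) hZ (hXZ s hs) hψ (hψint s hs)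
  calc ∫ ω, ψ (X t ω, Z ω) ∂P - ∫ ω, ψ (X 0 ω, Z ω) ∂P
      = ∫ z, (∫ ω, ψ (X t ω, z) ∂P - ∫ ω, ψ (X 0 ω, z) ∂P) ∂(P.map Z) := by
        rw [integral_sub (hψ_int t ht) (hψ_int 0 le_rfl), hψ_eq t ht, hψ_eq 0 le_rfl]
    _ = ∫ z, (∫ s in (0 : ℝ)..t, ∫ ω, φ (X s ω, z) ∂P) ∂(P.map Z) := by
        refine integral_congr_ae ?_
        filter_upwards [(integrable_prod_map_of_indepFun hXt hZ hXZt hφ hint).prod_left_ae]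
          with z hz using hD z t ht hz
    _ = ∫ s in (0 : ℝ)..t, ∫ ω, φ (X s ω, Z ω) ∂P := by
        simp only [intervalIntegral.integral_of_le ht]
        exact (integral_integral_comp_prodMk_of_indepFun hXt hZ hXZt hφ hint).symm

theorem DynkinFormula.prodMk_of_indepFun_left [MeasurableSpace E₁] [MeasurableSpace E₂]
    [IsFiniteMeasure P] {Z : Ω → E₁} {Y : ℝ → Ω → E₂} {ψ φ : E₁ × E₂ → G}
    (hD : ∀ z, DynkinFormula P Y (fun y ↦ ψ (z, y)) fun y ↦ φ (z, y))
    (hY : Measurable fun p : ℝ≥0 × Ω ↦ Y p.1 p.2) (hZ : AEMeasurable Z P)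
    (hZY : ∀ t, 0 ≤ t → Z ⟂ᵢ[P] Y t) (hψ : StronglyMeasurable ψ) (hφ : StronglyMeasurable φ)
    (hψint : ∀ t, 0 ≤ t → Integrable (fun ω ↦ ψ (Z ω, Y t ω)) P) :
    DynkinFormula P (fun t ω ↦ (Z ω, Y t ω)) ψ φ :=
  DynkinFormula.prodMk_of_indepFun (ψ := ψ ∘ Prod.swap) (φ := φ ∘ Prod.swap) hD hY hZ
    (fun t ht ↦ (hZY t ht).symm) (hψ.comp_measurable measurable_swap)
    (hφ.comp_measurable measurable_swap) hψint

end Dynkin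

section Duality

variable {Ω E₁ E₂ G : Type*} [MeasurableSpace Ω] [NormedAddCommGroup G] {P : Measure Ω} {S : ℝ}

lemma ae_integrable_section [SFinite P] {f : (ℝ × ℝ) × Ω → G}
    (hf : Integrable f ((volume.restrict (Ioc 0 S ×ˢ Ioc 0 S)).prod P)) :
    ∀ᵐ t ∂volume.restrict (Ioc 0 S),
      Integrable (fun p : ℝ × Ω ↦ f ((p.1, t), p.2)) ((volume.restrict (Ioc 0 S)).prod P) := by
  rw [Measure.volume_eq_prod, ← Measure.prod_restrict] at hf
  have hperm : MeasurePreserving (fun q : ℝ × ℝ × Ω ↦ ((q.2.1, q.1), q.2.2))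
      ((volume.restrict (Ioc 0 S)).prod ((volume.restrict (Ioc 0 S)).prod P))
      (((volume.restrict (Ioc 0 S)).prod (volume.restrict (Ioc 0 S))).prod P) :=
    (Measure.measurePreserving_swap.prod (.id P)).comp (measurePreserving_prodAssoc _ _ P).symm
  exact (hperm.integrable_comp_of_integrable hf).prod_right_ae

variable [NormedSpace ℝ G]

theorem setIntegral_triangle_of_dynkinFormula [SFinite P] {X : ℝ → Ω → E₁} {Y : ℝ → Ω → E₂}
    {Ψ Φ : E₁ × E₂ → G} (hS : 0 ≤ S)
    (hD : ∀ t, 0 ≤ t → DynkinFormula P (fun s ω ↦ (X s ω, Y t ω)) Ψ Φ)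
    (hΦ : Integrable (fun q : (ℝ × ℝ) × Ω ↦ Φ (X q.1.1 q.2, Y q.1.2 q.2))
      ((volume.restrict (Ioc 0 S ×ˢ Ioc 0 S)).prod P)) :
    ∫ p in triangle S, ∫ ω, Φ (X p.1 ω, Y p.2 ω) ∂P =
      ∫ t in (0 : ℝ)..S, (∫ ω, Ψ (X (S - t) ω, Y t ω) ∂P - ∫ ω, Ψ (X 0 ω, Y t ω) ∂P) := by
  rw [setIntegral_triangle hS (IntegrableOn.mono_set hΦ.integral_prod_left triangle_subset),
    intervalIntegral.integral_of_le hS, intervalIntegral.integral_of_le hS]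
  refine integral_congr_ae ?_
  filter_upwards [ae_integrable_section hΦ, ae_restrict_mem measurableSet_Ioc] with t ht htS
  refine (hD t htS.1.le (S - t) (sub_nonneg.2 htS.2) (ht.mono_measure ?_)).symm
  gcongr
  linarith [htS.1]

theorem setIntegral_triangle_of_dynkinFormula_symm [SFinite P] {X : ℝ → Ω → E₁} {Y : ℝ → Ω → E₂}
    {Ψ Φ : E₁ × E₂ → G} (hS : 0 ≤ S)
    (hD : ∀ s, 0 ≤ s → DynkinFormula P (fun t ω ↦ (X s ω, Y t ω)) Ψ Φ)
    (hΦ : Integrable (fun q : (ℝ × ℝ) × Ω ↦ Φ (X q.1.1 q.2, Y q.1.2 q.2))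
      ((volume.restrict (Ioc 0 S ×ˢ Ioc 0 S)).prod P)) :
    ∫ p in triangle S, ∫ ω, Φ (X p.1 ω, Y p.2 ω) ∂P =
      ∫ s in (0 : ℝ)..S, (∫ ω, Ψ (X s ω, Y (S - s) ω) ∂P - ∫ ω, Ψ (X s ω, Y 0 ω) ∂P) := by
  have hswap : MeasurePreserving (Prod.swap : ℝ × ℝ → ℝ × ℝ)
      (volume.restrict (Ioc 0 S ×ˢ Ioc 0 S)) (volume.restrict (Ioc 0 S ×ˢ Ioc 0 S)) := by
    rw [Measure.volume_eq_prod, ← Measure.prod_restrict]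
    exact Measure.measurePreserving_swap
  rw [← setIntegral_triangle_comp_swap]
  exact setIntegral_triangle_of_dynkinFormula (Ψ := Ψ ∘ Prod.swap) (Φ := Φ ∘ Prod.swap) hS hD
    ((hswap.prod (.id P)).integrable_comp_of_integrable hΦ)

theorem setIntegral_triangle_sub_of_dynkinFormula [SFinite P] {X₁ : ℝ → Ω → E₁} {X₂ : ℝ → Ω → E₂}
    {Ψ Φ₁ Φ₂ : E₁ × E₂ → G} (hS : 0 ≤ S)
    (hD₁ : ∀ t, 0 ≤ t → DynkinFormula P (fun s ω ↦ (X₁ s ω, X₂ t ω)) Ψ Φ₁)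
    (hD₂ : ∀ s, 0 ≤ s → DynkinFormula P (fun t ω ↦ (X₁ s ω, X₂ t ω)) Ψ Φ₂)
    (hΦ₁ : Integrable (fun q : (ℝ × ℝ) × Ω ↦ Φ₁ (X₁ q.1.1 q.2, X₂ q.1.2 q.2))
      ((volume.restrict (Ioc 0 S ×ˢ Ioc 0 S)).prod P))
    (hΦ₂ : Integrable (fun q : (ℝ × ℝ) × Ω ↦ Φ₂ (X₁ q.1.1 q.2, X₂ q.1.2 q.2))
      ((volume.restrict (Ioc 0 S ×ˢ Ioc 0 S)).prod P))
    (hdiag : IntervalIntegrable (fun t ↦ ∫ ω, Ψ (X₁ t ω, X₂ (S - t) ω) ∂P) volume 0 S)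
    (hbot : IntervalIntegrable (fun t ↦ ∫ ω, Ψ (X₁ t ω, X₂ 0 ω) ∂P) volume 0 S)
    (hleft : IntervalIntegrable (fun t ↦ ∫ ω, Ψ (X₁ 0 ω, X₂ t ω) ∂P) volume 0 S) :
    ∫ p in triangle S, ∫ ω, (Φ₁ (X₁ p.1 ω, X₂ p.2 ω) - Φ₂ (X₁ p.1 ω, X₂ p.2 ω)) ∂P =
      ∫ T in (0 : ℝ)..S, (∫ ω, Ψ (X₁ T ω, X₂ 0 ω) ∂P - ∫ ω, Ψ (X₁ 0 ω, X₂ T ω) ∂P) := by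
  have hdiag' : IntervalIntegrable (fun t ↦ ∫ ω, Ψ (X₁ (S - t) ω, X₂ t ω) ∂P) volume 0 S := by
    simpa using (hdiag.comp_sub_left S).symm
  have hdiag_eq : ∫ t in (0 : ℝ)..S, ∫ ω, Ψ (X₁ (S - t) ω, X₂ t ω) ∂P =
      ∫ t in (0 : ℝ)..S, ∫ ω, Ψ (X₁ t ω, X₂ (S - t) ω) ∂P := by
    simpa using intervalIntegral.integral_comp_sub_left (a := 0) (b := S)
      (fun t ↦ ∫ ω, Ψ (X₁ t ω, X₂ (S - t) ω) ∂P) S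
  calc ∫ p in triangle S, ∫ ω, (Φ₁ (X₁ p.1 ω, X₂ p.2 ω) - Φ₂ (X₁ p.1 ω, X₂ p.2 ω)) ∂P
      = (∫ p in triangle S, ∫ ω, Φ₁ (X₁ p.1 ω, X₂ p.2 ω) ∂P) -
          ∫ p in triangle S, ∫ ω, Φ₂ (X₁ p.1 ω, X₂ p.2 ω) ∂P := by
        rw [← integral_sub (IntegrableOn.mono_set hΦ₁.integral_prod_left triangle_subset)
          (IntegrableOn.mono_set hΦ₂.integral_prod_left triangle_subset)]
        refine integral_congr_ae (ae_restrict_of_ae_restrict_of_subset triangle_subset ?_)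
        filter_upwards [hΦ₁.prod_right_ae, hΦ₂.prod_right_ae] with p h₁ h₂
          using integral_sub h₁ h₂
    _ = (∫ t in (0 : ℝ)..S, (∫ ω, Ψ (X₁ (S - t) ω, X₂ t ω) ∂P - ∫ ω, Ψ (X₁ 0 ω, X₂ t ω) ∂P)) -
          ∫ t in (0 : ℝ)..S, (∫ ω, Ψ (X₁ t ω, X₂ (S - t) ω) ∂P -
            ∫ ω, Ψ (X₁ t ω, X₂ 0 ω) ∂P) := by
        rw [setIntegral_triangle_of_dynkinFormula hS hD₁ hΦ₁,
          setIntegral_triangle_of_dynkinFormula_symm hS hD₂ hΦ₂]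
    _ = ∫ T in (0 : ℝ)..S, (∫ ω, Ψ (X₁ T ω, X₂ 0 ω) ∂P - ∫ ω, Ψ (X₁ 0 ω, X₂ T ω) ∂P) := by
        rw [intervalIntegral.integral_sub hdiag' hleft, intervalIntegral.integral_sub hdiag hbot,
          intervalIntegral.integral_sub hbot hleft, hdiag_eq]
        abel

theorem ae_duality_of_dynkinFormula [CompleteSpace G] [SFinite P] {X₁ : ℝ → Ω → E₁}
    {X₂ : ℝ → Ω → E₂} {Ψ Φ₁ Φ₂ : E₁ × E₂ → G}
    (hD₁ : ∀ t, 0 ≤ t → DynkinFormula P (fun s ω ↦ (X₁ s ω, X₂ t ω)) Ψ Φ₁)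
    (hD₂ : ∀ s, 0 ≤ s → DynkinFormula P (fun t ω ↦ (X₁ s ω, X₂ t ω)) Ψ Φ₂)
    (hΦ₁ : ∀ S, 0 ≤ S → Integrable (fun q : (ℝ × ℝ) × Ω ↦ Φ₁ (X₁ q.1.1 q.2, X₂ q.1.2 q.2))
      ((volume.restrict (Ioc 0 S ×ˢ Ioc 0 S)).prod P))
    (hΦ₂ : ∀ S, 0 ≤ S → Integrable (fun q : (ℝ × ℝ) × Ω ↦ Φ₂ (X₁ q.1.1 q.2, X₂ q.1.2 q.2))
      ((volume.restrict (Ioc 0 S ×ˢ Ioc 0 S)).prod P))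
    (hdiag : ∀ S, 0 ≤ S →
      IntervalIntegrable (fun t ↦ ∫ ω, Ψ (X₁ t ω, X₂ (S - t) ω) ∂P) volume 0 S)
    (hbot : ∀ S, 0 ≤ S → IntervalIntegrable (fun t ↦ ∫ ω, Ψ (X₁ t ω, X₂ 0 ω) ∂P) volume 0 S)
    (hleft : ∀ S, 0 ≤ S → IntervalIntegrable (fun t ↦ ∫ ω, Ψ (X₁ 0 ω, X₂ t ω) ∂P) volume 0 S) :
    ∀ᵐ T ∂volume.restrict (Ici (0 : ℝ)),
      ∫ ω, Ψ (X₁ T ω, X₂ 0 ω) ∂P - ∫ ω, Ψ (X₁ 0 ω, X₂ T ω) ∂P =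
        ∫ t in (0 : ℝ)..T, ∫ ω, (Φ₁ (X₁ t ω, X₂ (T - t) ω) - Φ₂ (X₁ t ω, X₂ (T - t) ω)) ∂P := by
  have htri (S : ℝ) (hS : 0 ≤ S) : IntegrableOn
      (fun p : ℝ × ℝ ↦ ∫ ω, (Φ₁ (X₁ p.1 ω, X₂ p.2 ω) - Φ₂ (X₁ p.1 ω, X₂ p.2 ω)) ∂P)
      (triangle S) :=
    IntegrableOn.mono_set ((hΦ₁ S hS).sub (hΦ₂ S hS)).integral_prod_left triangle_subset
  refine ae_restrict_Ici_eq_of_intervalIntegral_eq (fun S hS ↦ (hbot S hS).sub (hleft S hS))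
    (fun S hS ↦ intervalIntegrable_integral_antidiagonal hS (htri S hS)) fun S hS ↦ ?_
  rw [← setIntegral_triangle_eq_integral_antidiagonal hS (htri S hS)]
  exact (setIntegral_triangle_sub_of_dynkinFormula hS hD₁ hD₂ (hΦ₁ S hS) (hΦ₂ S hS) (hdiag S hS)
    (hbot S hS) (hleft S hS)).symm

end Duality

section TwoProcesses

variable {Ω E₁ E₂ G : Type*} [MeasurableSpace Ω] [MeasurableSpace E₁] [MeasurableSpace E₂]
  [NormedAddCommGroup G] {P : Measure Ω} {S : ℝ} {X₁ : ℝ → Ω → E₁} {X₂ : ℝ → Ω → E₂}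
  {f : E₁ × E₂ → G}

lemma integrable_square_of_lintegral_lt_top [SFinite P]
    (hX₁ : Measurable fun p : ℝ≥0 × Ω ↦ X₁ p.1 p.2)
    (hX₂ : Measurable fun p : ℝ≥0 × Ω ↦ X₂ p.1 p.2)
    (hf : StronglyMeasurable f)
    (hfin : ∫⁻ s in Icc 0 S, ∫⁻ t in Icc 0 S, ∫⁻ ω, ‖f (X₁ s ω, X₂ t ω)‖ₑ ∂P < ∞) :
    Integrable (fun q : (ℝ × ℝ) × Ω ↦ f (X₁ q.1.1 q.2, X₂ q.1.2 q.2))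
      ((volume.restrict (Ioc 0 S ×ˢ Ioc 0 S)).prod P) := by
  have hpos : ∀ᵐ p ∂volume.restrict (Ioc 0 S ×ˢ Ioc 0 S), 0 ≤ p.1 ∧ 0 ≤ p.2 :=
    (ae_restrict_mem (measurableSet_Ioc.prod measurableSet_Ioc)).mono
      fun p hp ↦ ⟨hp.1.1.le, hp.2.1.le⟩
  have hmeas : AEStronglyMeasurable (fun q : (ℝ × ℝ) × Ω ↦ f (X₁ q.1.1 q.2, X₂ q.1.2 q.2))
      ((volume.restrict (Ioc 0 S ×ˢ Ioc 0 S)).prod P) :=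
    hf.aestronglyMeasurable.comp_aemeasurable
      ((aemeasurable_comp_time hX₁ measurable_fst (hpos.mono fun _ ↦ And.left)).prodMk
        (aemeasurable_comp_time hX₂ measurable_snd (hpos.mono fun _ ↦ And.right)))
  refine ⟨hmeas, ?_⟩
  have hprod := hmeas.enorm.lintegral_prod_right'
  rw [HasFiniteIntegral, lintegral_prod _ hmeas.enorm]
  rw [Measure.volume_eq_prod, ← Measure.prod_restrict] at hprod ⊢
  rw [lintegral_prod _ hprod]
  simpa only [restrict_Ioc_eq_restrict_Icc] using hfin

lemma intervalIntegrable_integral_comp_of_bounded [NormedSpace ℝ G] [IsFiniteMeasure P]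
    (hX₁ : Measurable fun p : ℝ≥0 × Ω ↦ X₁ p.1 p.2)
    (hX₂ : Measurable fun p : ℝ≥0 × Ω ↦ X₂ p.1 p.2)
    (hf : StronglyMeasurable f) {C : ℝ} (hC : ∀ x, ‖f x‖ ≤ C) (hS : 0 ≤ S) {σ τ : ℝ → ℝ}
    (hσ : Measurable σ) (hτ : Measurable τ) (hσ0 : ∀ t ∈ Ioc 0 S, 0 ≤ σ t)
    (hτ0 : ∀ t ∈ Ioc 0 S, 0 ≤ τ t) :
    IntervalIntegrable (fun t ↦ ∫ ω, f (X₁ (σ t) ω, X₂ (τ t) ω) ∂P) volume 0 S := by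
  have hmeas : AEStronglyMeasurable (fun p : ℝ × Ω ↦ f (X₁ (σ p.1) p.2, X₂ (τ p.1) p.2))
      ((volume.restrict (Ioc 0 S)).prod P) :=
    hf.aestronglyMeasurable.comp_aemeasurable
      ((aemeasurable_comp_time hX₁ hσ (ae_restrict_of_forall_mem measurableSet_Ioc hσ0)).prodMk
        (aemeasurable_comp_time hX₂ hτ (ae_restrict_of_forall_mem measurableSet_Ioc hτ0)))
  rw [intervalIntegrable_iff_integrableOn_Ioc_of_le hS]
  exact (Integrable.of_bound hmeas C (ae_of_all _ fun p ↦ hC _)).integral_prod_left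

end TwoProcesses

theorem duality_with_error_term_ae_general {Ω E₁ E₂ G : Type*} [MeasurableSpace Ω]
    (P : Measure Ω) [IsFiniteMeasure P] [MeasurableSpace E₁] [MeasurableSpace E₂]
    [NormedAddCommGroup G] [NormedSpace ℝ G] [CompleteSpace G] {Ψ Φ₁ Φ₂ : E₁ × E₂ → G}
    (hΨ : StronglyMeasurable Ψ) {C : ℝ} (hC : ∀ x, ‖Ψ x‖ ≤ C)
    (hΦ₁ : StronglyMeasurable Φ₁) (hΦ₂ : StronglyMeasurable Φ₂)
    {X₁ : ℝ → Ω → E₁} {X₂ : ℝ → Ω → E₂}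
    (hX₁ : Measurable fun p : ℝ≥0 × Ω ↦ X₁ p.1 p.2)
    (hX₂ : Measurable fun p : ℝ≥0 × Ω ↦ X₂ p.1 p.2)
    (hindep : ∀ s t, 0 ≤ s → 0 ≤ t → X₁ s ⟂ᵢ[P] X₂ t)
    (hD₁ : ∀ x₂, DynkinFormula P X₁ (fun x₁ ↦ Ψ (x₁, x₂)) fun x₁ ↦ Φ₁ (x₁, x₂))
    (hD₂ : ∀ x₁, DynkinFormula P X₂ (fun x₂ ↦ Ψ (x₁, x₂)) fun x₂ ↦ Φ₂ (x₁, x₂))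
    (hfin₁ : ∀ T, 0 ≤ T →
      ∫⁻ s in Icc 0 T, ∫⁻ t in Icc 0 T, ∫⁻ ω, ‖Φ₁ (X₁ s ω, X₂ t ω)‖ₑ ∂P < ∞)
    (hfin₂ : ∀ T, 0 ≤ T →
      ∫⁻ s in Icc 0 T, ∫⁻ t in Icc 0 T, ∫⁻ ω, ‖Φ₂ (X₁ s ω, X₂ t ω)‖ₑ ∂P < ∞) :
    ∀ᵐ T ∂volume.restrict (Ici (0 : ℝ)),
      ∫ ω, Ψ (X₁ T ω, X₂ 0 ω) ∂P - ∫ ω, Ψ (X₁ 0 ω, X₂ T ω) ∂P =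
        ∫ t in (0 : ℝ)..T, ∫ ω, (Φ₁ (X₁ t ω, X₂ (T - t) ω) - Φ₂ (X₁ t ω, X₂ (T - t) ω)) ∂P := by
  have hX₁m (t : ℝ) (ht : 0 ≤ t) : Measurable (X₁ t) := measurable_of_measurable_uncurry hX₁ ht
  have hX₂m (t : ℝ) (ht : 0 ≤ t) : Measurable (X₂ t) := measurable_of_measurable_uncurry hX₂ ht
  have hΨint (s t : ℝ) (hs : 0 ≤ s) (ht : 0 ≤ t) : Integrable (fun ω ↦ Ψ (X₁ s ω, X₂ t ω)) P :=
    .of_bound (hΨ.comp_measurable ((hX₁m s hs).prodMk (hX₂m t ht))).aestronglyMeasurable C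
      (ae_of_all _ fun _ ↦ hC _)
  have hintegrable {σ τ : ℝ → ℝ} (hσ : Measurable σ) (hτ : Measurable τ) (S : ℝ) (hS : 0 ≤ S) :=
    intervalIntegrable_integral_comp_of_bounded (P := P) hX₁ hX₂ hΨ hC hS hσ hτ
  refine ae_duality_of_dynkinFormula
    (fun t ht ↦ .prodMk_of_indepFun hD₁ hX₁ (hX₂m t ht).aemeasurable
      (fun s hs ↦ hindep s t hs ht) hΨ hΦ₁ fun s hs ↦ hΨint s t hs ht)
    (fun s hs ↦ .prodMk_of_indepFun_left hD₂ hX₂ (hX₁m s hs).aemeasurable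
      (fun t ht ↦ hindep s t hs ht) hΨ hΦ₂ fun t ht ↦ hΨint s t hs ht)
    (fun S hS ↦ integrable_square_of_lintegral_lt_top hX₁ hX₂ hΦ₁ (hfin₁ S hS))
    (fun S hS ↦ integrable_square_of_lintegral_lt_top hX₁ hX₂ hΦ₂ (hfin₂ S hS))
    (fun S hS ↦ hintegrable measurable_id (measurable_id.const_sub S) S hS
      (fun t ht ↦ ht.1.le) fun t ht ↦ sub_nonneg.2 ht.2)
    (fun S hS ↦ hintegrable measurable_id (measurable_const (a := 0)) S hS
      (fun t ht ↦ ht.1.le) fun _ _ ↦ le_rfl)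
    (fun S hS ↦ hintegrable (measurable_const (a := 0)) measurable_id S hS
      (fun _ _ ↦ le_rfl) fun t ht ↦ ht.1.le)

/-- **Duality with error term** (Athreya–Swart, correction to "Branching-coalescing
particle systems", Theorem 1, a.e. part). -/
theorem duality_with_error_term_ae
    {Ω : Type*} [MeasurableSpace Ω] (P : Measure Ω) [IsProbabilityMeasure P]
    {E₁ E₂ : Type*}
    [TopologicalSpace E₁] [TopologicalSpace.MetrizableSpace E₁]
    [MeasurableSpace E₁] [BorelSpace E₁]
    [TopologicalSpace E₂] [TopologicalSpace.MetrizableSpace E₂]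
    [MeasurableSpace E₂] [BorelSpace E₂]
    (Ψ Φ₁ Φ₂ : E₁ × E₂ → ℝ)
    (hΨm : Measurable Ψ) (C : ℝ) (hΨb : ∀ x, |Ψ x| ≤ C)
    (hΦ₁m : Measurable Φ₁) (hΦ₂m : Measurable Φ₂)
    (X₁ : ℝ → Ω → E₁) (X₂ : ℝ → Ω → E₂)
    (hX₁sm : ∀ t, StronglyMeasurable (X₁ t))
    (hX₂sm : ∀ t, StronglyMeasurable (X₂ t))
    -- càdlàg sample paths on [0,∞)
    (hX₁rc : ∀ ω, ∀ t : ℝ, 0 ≤ t → ContinuousWithinAt (fun s => X₁ s ω) (Ici t) t)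
    (hX₁ll : ∀ ω, ∀ t : ℝ, 0 < t →
      ∃ l, Tendsto (fun s => X₁ s ω) (nhdsWithin t (Iio t)) (nhds l))
    (hX₂rc : ∀ ω, ∀ t : ℝ, 0 ≤ t → ContinuousWithinAt (fun s => X₂ s ω) (Ici t) t)
    (hX₂ll : ∀ ω, ∀ t : ℝ, 0 < t →
      ∃ l, Tendsto (fun s => X₂ s ω) (nhdsWithin t (Iio t)) (nhds l))
    -- X¹ and X² are independent
    (hindep : IndepFun (fun ω t => X₁ t ω) (fun ω t => X₂ t ω) P)
    -- martingale problem for X¹ (with integrability), for every x₂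
    (hΨint₁ : ∀ x₂, ∀ t : ℝ, 0 ≤ t → Integrable (fun ω => Ψ (X₁ t ω, x₂)) P)
    (hΦint₁ : ∀ x₂, ∀ t : ℝ, 0 ≤ t →
      (∫⁻ s in Icc (0 : ℝ) t, ∫⁻ ω, ENNReal.ofReal |Φ₁ (X₁ s ω, x₂)| ∂P) < ⊤)
    (hmart₁ : ∀ x₂, Martingale
      (fun (t : ℝ≥0) ω => Ψ (X₁ t ω, x₂) - ∫ s in (0 : ℝ)..(t : ℝ), Φ₁ (X₁ s ω, x₂))
      (Filtration.natural (fun (t : ℝ≥0) => X₁ t) (fun t => hX₁sm t)) P)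
    -- martingale problem for X² (with integrability), for every x₁
    (hΨint₂ : ∀ x₁, ∀ t : ℝ, 0 ≤ t → Integrable (fun ω => Ψ (x₁, X₂ t ω)) P)
    (hΦint₂ : ∀ x₁, ∀ t : ℝ, 0 ≤ t →
      (∫⁻ s in Icc (0 : ℝ) t, ∫⁻ ω, ENNReal.ofReal |Φ₂ (x₁, X₂ s ω)| ∂P) < ⊤)
    (hmart₂ : ∀ x₁, Martingale
      (fun (t : ℝ≥0) ω => Ψ (x₁, X₂ t ω) - ∫ s in (0 : ℝ)..(t : ℝ), Φ₂ (x₁, X₂ s ω))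
      (Filtration.natural (fun (t : ℝ≥0) => X₂ t) (fun t => hX₂sm t)) P)
    -- double integrability assumption (1.7)
    (hΦΦ₁ : ∀ T : ℝ, 0 ≤ T →
      (∫⁻ s in Icc (0 : ℝ) T, ∫⁻ t in Icc (0 : ℝ) T,
        ∫⁻ ω, ENNReal.ofReal |Φ₁ (X₁ s ω, X₂ t ω)| ∂P) < ⊤)
    (hΦΦ₂ : ∀ T : ℝ, 0 ≤ T →
      (∫⁻ s in Icc (0 : ℝ) T, ∫⁻ t in Icc (0 : ℝ) T,
        ∫⁻ ω, ENNReal.ofReal |Φ₂ (X₁ s ω, X₂ t ω)| ∂P) < ⊤) :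
    ∀ᵐ T ∂(volume.restrict (Ici (0 : ℝ))),
      (∫ ω, Ψ (X₁ T ω, X₂ 0 ω) ∂P) - (∫ ω, Ψ (X₁ 0 ω, X₂ T ω) ∂P)
        = ∫ t in (0 : ℝ)..T,
            ∫ ω, (Φ₁ (X₁ t ω, X₂ (T - t) ω) - Φ₂ (X₁ t ω, X₂ (T - t) ω)) ∂P := by
  refine duality_with_error_term_ae_general P hΨm.stronglyMeasurable hΨb hΦ₁m.stronglyMeasurable
    hΦ₂m.stronglyMeasurable
    (measurable_uncurry_of_rightContinuous (fun t ↦ (hX₁sm t).measurable) fun ω t ↦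
      (hX₁rc ω t t.2).comp NNReal.continuous_coe.continuousWithinAt fun _ h ↦ h)
    (measurable_uncurry_of_rightContinuous (fun t ↦ (hX₂sm t).measurable) fun ω t ↦
      (hX₂rc ω t t.2).comp NNReal.continuous_coe.continuousWithinAt fun _ h ↦ h)
    (fun s t _ _ ↦ hindep.comp (measurable_pi_apply s) (measurable_pi_apply t))
    (fun x₂ ↦ dynkinFormula_of_martingale (hmart₁ x₂))
    (fun x₁ ↦ dynkinFormula_of_martingale (hmart₂ x₁))
    (by simpa only [Real.enorm_eq_ofReal_abs] using hΦΦ₁)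
    (by simpa only [Real.enorm_eq_ofReal_abs] using hΦΦ₂)
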